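/- arXiv:1012.0433 — 2 statements merged into one kernel-verified Lean document; each statement's English description precedes it below -/
import Mathlib

section
/- The product Δ₁·Δ₂ = Σ_{n=max(|Δ₁|,|Δ₂|)}^{|Δ₁|+|Δ₂|} {Δ₁Δ₂}_n, extended bilinearly, endows the graded vector space A_∞° = ⊕_{n≥1} A_n with the structure of a commutative associative algebra: for all Young diagrams Δ₁, Δ₂, Δ₃ one has Δ₁·Δ₂ = Δ₂·Δ₁ and (Δ₁·Δ₂)·Δ₃ = Δ₁·(Δ₂·Δ₃). -/
open scoped Classical

/-- The full cycle type of a permutation of `Fin n`, including fixed points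
(i.e. rows of length 1). -/
noncomputable def fullCycleType {n : ℕ} (g : Equiv.Perm (Fin n)) : Multiset ℕ :=
  g.cycleType + Multiset.replicate (n - g.cycleType.sum) 1

/-- `Δ^k` : the Young diagram obtained from `Δ` by adding `k` rows of length 1,
realized as a partition of a given `m ≥ |Δ| `. -/
def padTo {n : ℕ} (Δ : n.Partition) (m : ℕ) (h : n ≤ m) : m.Partition where
  parts := Δ.parts + Multiset.replicate (m - n) 1
  parts_pos := by
    intro i hi
    rcases Multiset.mem_add.mp hi with h1 | h2
    · exact Δ.parts_pos h1
    · simp [Multiset.eq_of_mem_replicate h2]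
  parts_sum := by
    simp [Δ.parts_sum]
    omega

/-- The class sum `G_n(Δ)` : sum of all permutations of cycle type `Δ` in the group
algebra `ℚ[S_n]`. -/
noncomputable def classSum (n : ℕ) (Δ : n.Partition) :
    MonoidAlgebra ℚ (Equiv.Perm (Fin n)) :=
  ∑ g ∈ Finset.univ.filter (fun g => fullCycleType g = Δ.parts),
    MonoidAlgebra.single g (1 : ℚ)

/-- The coordinates of a central element of `ℚ[S_n]` in the basis of class sums:
the (average) coefficient on the conjugacy class of cycle type `Δ`. -/
noncomputable def classCoeff {n : ℕ} (x : MonoidAlgebra ℚ (Equiv.Perm (Fin n)))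
    (Δ : n.Partition) : ℚ :=
  (∑ g ∈ Finset.univ.filter (fun g => fullCycleType g = Δ.parts), x.coeff g) /
    ((Finset.univ.filter (fun g : Equiv.Perm (Fin n) => fullCycleType g = Δ.parts)).card : ℚ)

/-- An element of `A_n` (the centre of `ℚ[S_n]`), written in coordinates with respect to
the basis of class sums, viewed inside the group algebra. -/
noncomputable def embedCenter {n : ℕ} (x : n.Partition → ℚ) :
    MonoidAlgebra ℚ (Equiv.Perm (Fin n)) :=
  ∑ Δ : n.Partition, x Δ • classSum n Δ

/-- The product `∘` of the algebra `A_n` in the coordinates given by class sums. -/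
noncomputable def circ {n : ℕ} (x y : n.Partition → ℚ) : n.Partition → ℚ :=
  fun Δ => classCoeff (embedCenter x * embedCenter y) Δ

/-- The coordinates of a single Young diagram `Δ`, i.e. of the class sum `G_n(Δ) ∈ A_n`. -/
noncomputable def diagC {n : ℕ} (Δ : n.Partition) : n.Partition → ℚ :=
  fun Λ => if Λ = Δ then 1 else 0

/-- The padding map `ρ_{m-n} : A_n → A_m`,
`ρ_k(Δ) = ((r+k)!/(r!·k!))·Δ^k` where `r` is the number of rows of length 1 of `Δ`
(in class-sum coordinates); it is `0` when `m < n`. -/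
noncomputable def rhoTo {n : ℕ} (m : ℕ) (x : n.Partition → ℚ) : m.Partition → ℚ :=
  fun Λ =>
    if n ≤ m then
      ∑ Δ : n.Partition,
        (if Λ.parts = Δ.parts + Multiset.replicate (m - n) 1 then
          (((Δ.parts.count 1 + (m - n)).factorial : ℚ) /
            ((Δ.parts.count 1).factorial * (m - n).factorial)) * x Δ
        else 0)
    else 0

/-- The element `{Δ₁Δ₂}_n ∈ A_n`, defined by the recursion
`{Δ₁Δ₂}_n = ρ_{n−|Δ₁|}(Δ₁) ∘ ρ_{n−|Δ₂|}(Δ₂) − Σ_{k=max(|Δ₁|,|Δ₂|)}^{n−1} ρ_{n−k}({Δ₁Δ₂}_k)`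
for `max(|Δ₁|,|Δ₂|) ≤ n ≤ |Δ₁|+|Δ₂|` (and `0` outside this range). -/
noncomputable def bracket {n₁ n₂ : ℕ} (Δ₁ : n₁.Partition) (Δ₂ : n₂.Partition) :
    (n : ℕ) → n.Partition → ℚ
  | n =>
    if max n₁ n₂ ≤ n ∧ n ≤ n₁ + n₂ then
      circ (rhoTo n (diagC Δ₁)) (rhoTo n (diagC Δ₂)) -
        ∑ k ∈ (Finset.Ico (max n₁ n₂) n).attach,
          rhoTo n (bracket Δ₁ Δ₂ k.1)
    else 0
  termination_by n => n
  decreasing_by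
    have := Finset.mem_Ico.mp k.2
    omega

/-- The underlying graded vector space of the algebra `A_∞° = ⊕_n A_n`. -/
abbrev Ainf : Type := Π₀ n : ℕ, (Nat.Partition n → ℚ)

/-- A Young diagram `Δ` as an element of `A_∞°`. -/
noncomputable def ofDiag {n : ℕ} (Δ : n.Partition) : Ainf :=
  DFinsupp.single n (diagC Δ)

/-- The product of two Young diagrams in `A_∞°`:
`Δ₁·Δ₂ = Σ_{n=max(|Δ₁|,|Δ₂|)}^{|Δ₁|+|Δ₂|} {Δ₁Δ₂}_n`. -/
noncomputable def diagMul {n₁ n₂ : ℕ} (Δ₁ : n₁.Partition) (Δ₂ : n₂.Partition) : Ainf :=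
  ∑ n ∈ Finset.Icc (max n₁ n₂) (n₁ + n₂), DFinsupp.single n (bracket Δ₁ Δ₂ n)

/-- The bilinear extension of the product of Young diagrams to all of `A_∞°`. -/
noncomputable def mulAinf (x y : Ainf) : Ainf :=
  ∑ n₁ ∈ x.support, ∑ n₂ ∈ y.support,
    ∑ Δ₁ : Nat.Partition n₁, ∑ Δ₂ : Nat.Partition n₂,
      (x n₁ Δ₁ * y n₂ Δ₂) • diagMul Δ₁ Δ₂

/-!
Following Ivanov and Kerov, consider the monoid of partial permutations `(S, g)`, where `g` fixes
every point outside the finite set `S`, with product `(S, g) (T, h) = (S ∪ T, g h)`. Send the Young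
diagram `Δ` to the sum of all partial permutations of `{1, …, m}` of shape `Δ`. Products of such
sums are again combinations of such sums, with structure constants independent of `m`, because every
factor of a partial permutation supported on a subset is supported on that subset. They commute
because inversion is a shape-preserving anti-automorphism.

Forgetting `S` maps the sum of shape `Δ` to `ρ_{m-|Δ|}(Δ)`: the binomial coefficient counts the ways
to enlarge the support of `g` to a set `S` of the right size. Hence the degree `n` part of the
product of two Young diagrams satisfies the recursion defining `{Δ₁Δ₂}_n`, and `A_∞°` embeds into
the product over `m` of the algebras of partial permutations of `{1, …, m}`.
-/

open Equiv Equiv.Perm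

section MonoidAlgebra

variable {R M N : Type*}

theorem comapDomain_mul_of_range_divisorClosed {F : Type*} [Semiring R] [Mul M] [Mul N]
    [FunLike F M N] [MulHomClass F M N] (φ : F) (hφ : Function.Injective φ)
    (hrange : ∀ a b, a * b ∈ Set.range φ → a ∈ Set.range φ ∧ b ∈ Set.range φ)
    (x y : MonoidAlgebra R N) :
    (x * y).comapDomain φ hφ = x.comapDomain φ hφ * y.comapDomain φ hφ := by
  induction x using MonoidAlgebra.induction_linear with
  | zero => simp
  | add x x' hx hx' => simp only [add_mul, MonoidAlgebra.comapDomain_add, hx, hx']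
  | single a r =>
  induction y using MonoidAlgebra.induction_linear with
  | zero => simp
  | add y y' hy hy' => simp only [mul_add, MonoidAlgebra.comapDomain_add, hy, hy']
  | single b s =>
  rw [MonoidAlgebra.single_mul_single]
  by_cases hab : a ∈ Set.range φ ∧ b ∈ Set.range φ
  · obtain ⟨⟨a, rfl⟩, b, rfl⟩ := hab
    rw [← map_mul]
    simp only [MonoidAlgebra.comapDomain_single_map, MonoidAlgebra.single_mul_single]
  · rw [MonoidAlgebra.comapDomain_single_of_not_mem_range fun h => hab (hrange a b h)]
    rcases not_and_or.1 hab with ha | hb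
    · rw [MonoidAlgebra.comapDomain_single_of_not_mem_range ha, zero_mul]
    · rw [MonoidAlgebra.comapDomain_single_of_not_mem_range hb, mul_zero]

theorem mapDomain_star_mul [CommSemiring R] [Mul M] [StarMul M] (x y : MonoidAlgebra R M) :
    (x * y).mapDomain star = y.mapDomain star * x.mapDomain star := by
  induction x using MonoidAlgebra.induction_linear with
  | zero => simp
  | add x x' hx hx' => simp only [add_mul, mul_add, MonoidAlgebra.mapDomain_add, hx, hx']
  | single a r =>
  induction y using MonoidAlgebra.induction_linear with
  | zero => simp
  | add y y' hy hy' => simp only [add_mul, mul_add, MonoidAlgebra.mapDomain_add, hy, hy']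
  | single b s =>
  simp only [MonoidAlgebra.single_mul_single, MonoidAlgebra.mapDomain_single, star_mul, mul_comm]

theorem coeff_mapDomain_eq_sum [Semiring R] [Fintype M] [DecidableEq N]
    (φ : M → N) (x : MonoidAlgebra R M) (c : N) :
    (MonoidAlgebra.mapDomain φ x).coeff c = ∑ a with φ a = c, x.coeff a := by
  simp [MonoidAlgebra.mapDomain, Finsupp.mapDomain, Finsupp.sum_fintype, Finsupp.single_apply,
    Finset.sum_filter]

end MonoidAlgebra

section Diagram

/-- A Young diagram of arbitrary degree: the pair of its degree and a partition of that degree. -/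
abbrev Diagram : Type := Σ n : ℕ, n.Partition

theorem Diagram.ext_parts {Λ Δ : Diagram} (h : Λ.2.parts = Δ.2.parts) : Λ = Δ := by
  obtain ⟨n, Λ⟩ := Λ
  obtain ⟨m, Δ⟩ := Δ
  obtain rfl : n = m := by rw [← Λ.parts_sum, ← Δ.parts_sum, h]
  exact congrArg (Sigma.mk n) (Nat.Partition.ext h)

theorem fullCycleType_eq_parts_partition {n : ℕ} (g : Perm (Fin n)) :
    fullCycleType g = g.partition.parts := by
  rw [fullCycleType, parts_partition, sum_cycleType, Fintype.card_fin]

/-- The cycle type of a permutation of `Fin n`, fixed points included, as a partition of `n`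
itself rather than of `Fintype.card (Fin n)`. -/
noncomputable def cyclePartition {n : ℕ} (g : Perm (Fin n)) : n.Partition where
  parts := fullCycleType g
  parts_pos hi := g.partition.parts_pos (fullCycleType_eq_parts_partition g ▸ hi)
  parts_sum := by rw [fullCycleType_eq_parts_partition, g.partition.parts_sum, Fintype.card_fin]

theorem count_one_fullCycleType {n : ℕ} (g : Perm (Fin n)) :
    (fullCycleType g).count 1 = n - g.support.card := by
  have hcycle : g.cycleType.count 1 = 0 :=
    Multiset.count_eq_zero.2 fun h => (one_lt_of_mem_cycleType h).false
  rw [fullCycleType, Multiset.count_add, hcycle, zero_add, Multiset.count_replicate_self,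
    sum_cycleType]

theorem parts_eq_filter_add_replicate {n : ℕ} (Λ : n.Partition) :
    Λ.parts = Λ.parts.filter (2 ≤ ·) + Multiset.replicate (Λ.parts.count 1) 1 := by
  conv_lhs => rw [← Multiset.filter_add_not (2 ≤ ·) Λ.parts]
  rw [← Multiset.filter_eq']
  congr 1
  refine Multiset.filter_congr fun i hi => ?_
  have := Λ.parts_pos hi
  omega

theorem cyclePartition_surjective (n : ℕ) :
    Function.Surjective (cyclePartition : Perm (Fin n) → n.Partition) := by
  intro Λ
  have hsum : (Λ.parts.filter (2 ≤ ·)).sum + Λ.parts.count 1 = n := by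
    simpa [Λ.parts_sum] using (congrArg Multiset.sum (parts_eq_filter_add_replicate Λ)).symm
  obtain ⟨g, hg⟩ : ∃ g : Perm (Fin n), g.cycleType = Λ.parts.filter (2 ≤ ·) := by
    refine (exists_with_cycleType_iff _).2 ⟨?_, fun i hi => (Multiset.mem_filter.1 hi).2⟩
    rw [Fintype.card_fin]
    omega
  refine ⟨g, Nat.Partition.ext ?_⟩
  change fullCycleType g = Λ.parts
  rw [fullCycleType, hg, ← Nat.eq_sub_of_add_eq' hsum]
  exact (parts_eq_filter_add_replicate Λ).symm

end Diagram

section ExtendDomain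

variable {α β : Type*} [Fintype α] [DecidableEq β] [Fintype β] (e : α ↪ β)

theorem support_extendDomain_ofInjective [DecidableEq α] (g : Perm α) :
    (g.extendDomain (ofInjective e e.injective)).support = g.support.map e :=
  support_extend_domain _

theorem exists_extendDomain_eq {g : Perm β} (hg : g.support ⊆ Finset.univ.map e) :
    ∃ h : Perm α, h.extendDomain (ofInjective e e.injective) = g := by
  have hmem {b : β} (hb : g b ≠ b) : b ∈ Set.range e := by simpa using hg (mem_support.2 hb)
  have hrange (b : β) : g b ∈ Set.range e ↔ b ∈ Set.range e := by
    by_cases hb : g b = b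
    · rw [hb]
    · exact iff_of_true (hmem fun h => hb (g.injective h)) (hmem hb)
  refine ⟨(ofInjective e e.injective).symm.permCongr (g.subtypePerm hrange), Equiv.ext fun b => ?_⟩
  by_cases hb : b ∈ Set.range e
  · rw [extendDomain_apply_subtype _ _ hb]
    simp
  · rw [extendDomain_apply_not_subtype _ _ hb]
    by_contra hne
    exact hb (hmem (Ne.symm hne))

end ExtendDomain

/-- A partial permutation of `α` in the sense of Ivanov and Kerov: a permutation together with a
finite set, its domain, outside of which it is the identity. -/
@[ext]
structure PartialPerm (α : Type*) [DecidableEq α] [Fintype α] where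
  domain : Finset α
  toPerm : Perm α
  support_subset : toPerm.support ⊆ domain

namespace PartialPerm

variable {α β : Type*} [DecidableEq α] [Fintype α] [DecidableEq β] [Fintype β]

noncomputable instance : Fintype (PartialPerm α) :=
  Fintype.ofInjective (fun p => (p.domain, p.toPerm)) fun p q h => by
    rw [Prod.mk.injEq] at h
    exact PartialPerm.ext h.1 h.2

instance : Monoid (PartialPerm α) where
  mul p q :=
    { domain := p.domain ∪ q.domain
      toPerm := p.toPerm * q.toPerm
      support_subset := (support_mul_le _ _).trans
        (Finset.union_subset_union p.support_subset q.support_subset) }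
  one := { domain := ∅, toPerm := 1, support_subset := by simp }
  mul_assoc _ _ _ := PartialPerm.ext (Finset.union_assoc _ _ _) (mul_assoc _ _ _)
  one_mul _ := PartialPerm.ext (Finset.empty_union _) (one_mul _)
  mul_one _ := PartialPerm.ext (Finset.union_empty _) (mul_one _)

@[simp] theorem domain_mul (p q : PartialPerm α) : (p * q).domain = p.domain ∪ q.domain := rfl

/-- Inversion on the domain. It is not an inverse in the monoid, since multiplication never shrinks
the domain, so it is recorded as the involution of a `StarMul` structure. -/
instance : StarMul (PartialPerm α) where
  star p := { p with toPerm := p.toPerm⁻¹, support_subset := by simpa using p.support_subset }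
  star_involutive _ := PartialPerm.ext rfl (inv_inv _)
  star_mul _ _ := PartialPerm.ext (Finset.union_comm _ _) (mul_inv_rev _ _)

/-- The monoid homomorphism forgetting the domain. -/
def toPermHom : PartialPerm α →* Perm α where
  toFun := toPerm
  map_one' := rfl
  map_mul' _ _ := rfl

/-- A permutation viewed as a partial permutation with full domain. -/
def ofPerm (g : Perm α) : PartialPerm α where
  domain := Finset.univ
  toPerm := g
  support_subset := Finset.subset_univ _

/-- The cycle type of a partial permutation on its domain, the fixed points in the domain
contributing rows of length `1`. -/
def shape (p : PartialPerm α) : Diagram where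
  fst := p.domain.card
  snd :=
    { parts := p.toPerm.cycleType + Multiset.replicate (p.domain.card - p.toPerm.support.card) 1
      parts_pos := fun hi => by
        rcases Multiset.mem_add.1 hi with hcycle | hone
        · exact zero_lt_one.trans (one_lt_of_mem_cycleType hcycle)
        · exact (Multiset.eq_of_mem_replicate hone).symm ▸ zero_lt_one
      parts_sum := by
        have := Finset.card_le_card p.support_subset
        simp only [Multiset.sum_add, sum_cycleType, Multiset.sum_replicate, smul_eq_mul, mul_one]
        omega }

theorem shape_star (p : PartialPerm α) : (star p).shape = p.shape :=
  Diagram.ext_parts <| by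
    change p.toPerm⁻¹.cycleType + Multiset.replicate (p.domain.card - p.toPerm⁻¹.support.card) 1 = _
    rw [cycleType_inv, support_inv, shape]

theorem shape_ofPerm {n : ℕ} (g : Perm (Fin n)) : (ofPerm g).shape = ⟨n, cyclePartition g⟩ :=
  Diagram.ext_parts <| by
    simp only [shape, ofPerm, cyclePartition, fullCycleType, sum_cycleType, Finset.card_univ,
      Fintype.card_fin]

theorem isConj_of_shape_ofPerm_eq {g h : Perm α} (hshape : (ofPerm g).shape = (ofPerm h).shape) :
    IsConj g h :=
  partition_eq_of_isConj.2 <| Nat.Partition.ext <|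
    congrArg (fun Λ : Diagram => Λ.2.parts) hshape

section Map

variable (e : α ↪ β)

/-- The injective monoid homomorphism transporting partial permutations along an embedding. -/
noncomputable def mapHom : PartialPerm α →* PartialPerm β where
  toFun p :=
    { domain := p.domain.map e
      toPerm := p.toPerm.extendDomain (ofInjective e e.injective)
      support_subset := by
        rw [support_extendDomain_ofInjective]
        exact Finset.map_subset_map.2 p.support_subset }
  map_one' := PartialPerm.ext (Finset.map_empty e) (extendDomain_one _)
  map_mul' _ _ := PartialPerm.ext (Finset.map_union _ _) (extendDomain_mul _ _ _).symm

theorem mapHom_injective : Function.Injective (mapHom e) := fun _ _ h =>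
  PartialPerm.ext (Finset.map_injective e (congrArg domain h))
    (extendDomainHom_injective _ (congrArg toPerm h))

theorem shape_mapHom (p : PartialPerm α) : (mapHom e p).shape = p.shape :=
  Diagram.ext_parts <| by
    simp only [shape, mapHom, MonoidHom.coe_mk, OneHom.coe_mk, cycleType_extendDomain,
      support_extendDomain_ofInjective, Finset.card_map]

theorem mem_range_mapHom {p : PartialPerm β} :
    p ∈ Set.range (mapHom e) ↔ p.domain ⊆ Finset.univ.map e := by
  constructor
  · rintro ⟨q, rfl⟩
    exact Finset.map_subset_map.2 (Finset.subset_univ _)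
  · intro hp
    obtain ⟨S, -, hS⟩ := Finset.subset_map_iff.1 hp
    obtain ⟨g, hg⟩ := exists_extendDomain_eq e (p.support_subset.trans hp)
    refine ⟨⟨S, g, ?_⟩, PartialPerm.ext hS.symm hg⟩
    rw [← Finset.map_subset_map (f := e), ← support_extendDomain_ofInjective, hg, ← hS]
    exact p.support_subset

theorem mem_range_mapHom_of_mul_mem (p q : PartialPerm β) (h : p * q ∈ Set.range (mapHom e)) :
    p ∈ Set.range (mapHom e) ∧ q ∈ Set.range (mapHom e) := by
  simpa only [mem_range_mapHom, domain_mul, Finset.union_subset_iff] using h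

theorem mapHom_toEmbedding_ofPerm (c g : Perm α) :
    mapHom c.toEmbedding (ofPerm g) = ofPerm (c * g * c⁻¹) := by
  refine PartialPerm.ext (Finset.map_univ_equiv c) (Equiv.ext fun a => ?_)
  simpa [mapHom, ofPerm] using
    extendDomain_apply_image g (ofInjective c.toEmbedding c.toEmbedding.injective) (c⁻¹ a)

end Map

theorem exists_mapHom_ofPerm_eq (p : PartialPerm α) {n : ℕ} (hn : p.domain.card = n) :
    ∃ (e : Fin n ↪ α) (g : Perm (Fin n)), mapHom e (ofPerm g) = p := by
  let e : Fin n ↪ α :=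
    (p.domain.equivFinOfCardEq hn).symm.toEmbedding.trans (Function.Embedding.subtype _)
  have he : Finset.univ.map e = p.domain := by
    rw [← Finset.map_map, Finset.map_univ_equiv, Finset.univ_eq_attach, Finset.attach_map_val]
  obtain ⟨g, hg⟩ := exists_extendDomain_eq e (he ▸ p.support_subset)
  exact ⟨e, g, PartialPerm.ext he hg⟩

section ShapeSum

variable {R : Type*} [Semiring R]

/-- The linear map sending a function `f` of Young diagrams to the element `∑ p, f p.shape • p` of
the algebra of partial permutations of `α`. -/
noncomputable def shapeSum (α : Type*) [DecidableEq α] [Fintype α] :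
    (Diagram → R) →ₗ[R] MonoidAlgebra R (PartialPerm α) where
  toFun f := MonoidAlgebra.ofCoeff (Finsupp.equivFunOnFinite.symm fun p => f p.shape)
  map_add' _ _ := by ext; rfl
  map_smul' _ _ := by ext; rfl

@[simp] theorem coeff_shapeSum (f : Diagram → R) (p : PartialPerm α) :
    (shapeSum α f).coeff p = f p.shape := rfl

theorem comapDomain_shapeSum (e : α ↪ β) (f : Diagram → R) :
    (shapeSum β f).comapDomain (mapHom e) (mapHom_injective e) = shapeSum α f := by
  ext p
  rw [MonoidAlgebra.coeff_comapDomain, Finsupp.comapDomain_apply, coeff_shapeSum, coeff_shapeSum,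
    shape_mapHom]

theorem coeff_shapeSum_mul_shapeSum_mapHom (e : α ↪ β) (f h : Diagram → R) (p : PartialPerm α) :
    (shapeSum β f * shapeSum β h).coeff (mapHom e p) = (shapeSum α f * shapeSum α h).coeff p := by
  rw [← comapDomain_shapeSum e f, ← comapDomain_shapeSum e h,
    ← comapDomain_mul_of_range_divisorClosed _ _ (mem_range_mapHom_of_mul_mem e),
    MonoidAlgebra.coeff_comapDomain, Finsupp.comapDomain_apply]

theorem coeff_shapeSum_mul_shapeSum_congr (f h : Diagram → R) {p : PartialPerm α}
    {q : PartialPerm β} (hpq : p.shape = q.shape) :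
    (shapeSum α f * shapeSum α h).coeff p = (shapeSum β f * shapeSum β h).coeff q := by
  obtain ⟨n, hn⟩ : ∃ n, p.domain.card = n := ⟨_, rfl⟩
  have hcard : q.domain.card = n := (congrArg Sigma.fst hpq).symm.trans hn
  obtain ⟨e, g, rfl⟩ := p.exists_mapHom_ofPerm_eq hn
  obtain ⟨e', g', rfl⟩ := q.exists_mapHom_ofPerm_eq hcard
  rw [shape_mapHom, shape_mapHom] at hpq
  obtain ⟨c, rfl⟩ := isConj_iff.1 (isConj_of_shape_ofPerm_eq hpq)
  rw [coeff_shapeSum_mul_shapeSum_mapHom, coeff_shapeSum_mul_shapeSum_mapHom,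
    ← mapHom_toEmbedding_ofPerm, coeff_shapeSum_mul_shapeSum_mapHom]

/-- The product of functions of Young diagrams whose structure constants count factorizations of
partial permutations. Any partial permutation of shape `Λ` may be factored; the choice made here is
a permutation of `Fin Λ.1` with full domain. -/
noncomputable def convolution (f h : Diagram → R) (Λ : Diagram) : R :=
  (shapeSum (Fin Λ.1) f * shapeSum (Fin Λ.1) h).coeff
    (ofPerm (Function.surjInv (cyclePartition_surjective Λ.1) Λ.2))

theorem shapeSum_convolution (f h : Diagram → R) :
    shapeSum α (convolution f h) = shapeSum α f * shapeSum α h := by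
  ext p
  refine coeff_shapeSum_mul_shapeSum_congr f h ?_
  rw [shape_ofPerm, Function.surjInv_eq (cyclePartition_surjective _)]

theorem mapDomain_star_shapeSum (f : Diagram → R) :
    (shapeSum α f).mapDomain star = shapeSum α f := by
  ext p
  obtain ⟨q, rfl⟩ := star_involutive.surjective p
  rw [MonoidAlgebra.mapDomain, MonoidAlgebra.coeff_ofCoeff,
    Finsupp.mapDomain_apply star_injective, coeff_shapeSum, coeff_shapeSum, shape_star]

theorem commute_shapeSum {R : Type*} [CommSemiring R] (f h : Diagram → R) :
    Commute (shapeSum α f) (shapeSum α h) :=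
  calc shapeSum α f * shapeSum α h
      = (shapeSum α f * shapeSum α h).mapDomain star := by
        rw [← shapeSum_convolution, mapDomain_star_shapeSum]
    _ = shapeSum α h * shapeSum α f := by
        rw [mapDomain_star_mul, mapDomain_star_shapeSum, mapDomain_star_shapeSum]

theorem convolution_single_eq_zero {Δ₁ Δ₂ Λ : Diagram} (a b : R)
    (hΛ : ¬(max Δ₁.1 Δ₂.1 ≤ Λ.1 ∧ Λ.1 ≤ Δ₁.1 + Δ₂.1)) :
    convolution (Pi.single Δ₁ a) (Pi.single Δ₂ b) Λ = 0 := by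
  contrapose! hΛ
  obtain ⟨p, hp, q, hq, hpq⟩ := Finset.mem_mul.1
    (MonoidAlgebra.support_coeff_mul_subset _ _ (Finsupp.mem_support_iff.2 hΛ))
  have domain_card_eq {Δ : Diagram} {c : R} {r : PartialPerm (Fin Λ.1)}
      (hr : r ∈ (shapeSum (Fin Λ.1) (Pi.single Δ c)).coeff.support) : r.domain.card = Δ.1 := by
    by_contra hne
    refine Finsupp.mem_support_iff.1 hr (Pi.single_eq_of_ne (fun h => hne ?_) _)
    exact congrArg Sigma.fst h
  have hunion : (p.domain ∪ q.domain).card = Λ.1 := by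
    rw [← domain_mul, hpq]
    exact Finset.card_fin _
  rw [← domain_card_eq hp, ← domain_card_eq hq]
  exact ⟨(max_le (Finset.card_le_card Finset.subset_union_left)
    (Finset.card_le_card Finset.subset_union_right)).trans_eq hunion,
    hunion.symm.trans_le (Finset.card_union_le _ _)⟩

end ShapeSum

theorem fullCycleType_toPerm {m : ℕ} (p : PartialPerm (Fin m)) :
    fullCycleType p.toPerm = p.shape.2.parts + Multiset.replicate (m - p.domain.card) 1 := by
  have hsupport := Finset.card_le_card p.support_subset
  have hdomain := p.domain.card_le_univ
  rw [Fintype.card_fin] at hdomain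
  rw [fullCycleType, sum_cycleType, shape, add_assoc, ← Multiset.replicate_add]
  congr 2
  omega

theorem shape_eq_iff {m : ℕ} {p : PartialPerm (Fin m)} {Δ : Diagram} :
    p.shape = Δ ↔ p.domain.card = Δ.1 ∧
      fullCycleType p.toPerm = Δ.2.parts + Multiset.replicate (m - Δ.1) 1 := by
  constructor
  · rintro rfl
    exact ⟨rfl, p.fullCycleType_toPerm⟩
  · rintro ⟨hcard, hcycle⟩
    rw [fullCycleType_toPerm, hcard] at hcycle
    exact Diagram.ext_parts (add_right_cancel hcycle)

theorem card_toPerm_eq_and_domain_card_eq (g : Perm α) {k : ℕ} (hk : g.support.card ≤ k) :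
    (Finset.univ.filter fun p : PartialPerm α => p.toPerm = g ∧ p.domain.card = k).card =
      (Fintype.card α - g.support.card).choose (k - g.support.card) := by
  rw [← Finset.card_univ, ← Finset.card_filter_powersetCard_subset _ _ _ (Finset.subset_univ _) hk]
  refine Finset.card_bij (fun p _ => p.domain) ?_ ?_ ?_
  · rintro p hp
    obtain ⟨rfl, hcard⟩ := (Finset.mem_filter.1 hp).2
    simpa [hcard] using p.support_subset
  · rintro p hp q hq hdomain
    simp only [Finset.mem_filter, Finset.mem_univ, true_and] at hp hq
    exact PartialPerm.ext hdomain (hp.1.trans hq.1.symm)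
  · intro S hS
    simp only [Finset.mem_filter, Finset.mem_powersetCard] at hS
    exact ⟨⟨S, g, hS.2⟩, by simpa using hS.1.2, rfl⟩

theorem card_toPerm_eq_and_shape_eq {m : ℕ} (g : Perm (Fin m)) {Δ : Diagram} (hΔ : Δ.1 ≤ m) :
    (Finset.univ.filter fun p : PartialPerm (Fin m) => p.toPerm = g ∧ p.shape = Δ).card =
      if fullCycleType g = Δ.2.parts + Multiset.replicate (m - Δ.1) 1 then
        (Δ.2.parts.count 1 + (m - Δ.1)).choose (Δ.2.parts.count 1) else 0 := by
  split_ifs with hg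
  · have hfixed : m - g.support.card = Δ.2.parts.count 1 + (m - Δ.1) := by
      simpa [count_one_fullCycleType] using congrArg (Multiset.count 1) hg
    have hsupport := g.support.card_le_univ
    rw [Fintype.card_fin] at hsupport
    have hfilter (p : PartialPerm (Fin m)) :
        p.toPerm = g ∧ p.shape = Δ ↔ p.toPerm = g ∧ p.domain.card = Δ.1 := by
      rw [shape_eq_iff]
      refine and_congr_right ?_
      rintro rfl
      exact and_iff_left hg
    simp only [hfilter]
    rw [card_toPerm_eq_and_domain_card_eq g (by omega), Fintype.card_fin, hfixed]
    congr 1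
    omega
  · rw [Finset.card_eq_zero, Finset.filter_eq_empty_iff]
    rintro p - ⟨rfl, hshape⟩
    exact hg (shape_eq_iff.1 hshape).2

end PartialPerm

open PartialPerm

section ClassSum

variable {n : ℕ}

theorem coeff_embedCenter (x : n.Partition → ℚ) (g : Perm (Fin n)) :
    (embedCenter x).coeff g = x (cyclePartition g) := by
  have hclass (Δ : n.Partition) :
      (classSum n Δ).coeff g = if cyclePartition g = Δ then 1 else 0 := by
    simp [classSum, MonoidAlgebra.coeff_sum, Finsupp.finsetSum_apply, Finsupp.single_apply,
      Nat.Partition.ext_iff, cyclePartition]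
  simp [embedCenter, MonoidAlgebra.coeff_sum, Finsupp.finsetSum_apply, hclass]

theorem classCoeff_embedCenter (x : n.Partition → ℚ) : classCoeff (embedCenter x) = x := by
  funext Δ
  obtain ⟨g, hg⟩ := cyclePartition_surjective n Δ
  have hcoeff (h : Perm (Fin n)) (hh : h ∈ Finset.univ.filter (fullCycleType · = Δ.parts)) :
      (embedCenter x).coeff h = x Δ := by
    rw [coeff_embedCenter]
    exact congrArg x (Nat.Partition.ext (Finset.mem_filter.1 hh).2)
  have hcard : ((Finset.univ.filter fun h : Perm (Fin n) => fullCycleType h = Δ.parts).card : ℚ)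
      ≠ 0 :=
    Nat.cast_ne_zero.2 (Finset.card_ne_zero.2
      ⟨g, Finset.mem_filter.2 ⟨Finset.mem_univ g, congrArg Nat.Partition.parts hg⟩⟩)
  rw [classCoeff, Finset.sum_congr rfl hcoeff, Finset.sum_const, nsmul_eq_mul,
    mul_div_cancel_left₀ _ hcard]

end ClassSum

section Padding

theorem rhoTo_eq_zero {n : ℕ} (m : ℕ) {x : n.Partition → ℚ} (hx : ∀ Δ, x Δ = 0) :
    rhoTo m x = 0 := by
  funext Λ
  simp [rhoTo, hx]

theorem rhoTo_self {n : ℕ} (x : n.Partition → ℚ) : rhoTo n x = x := by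
  funext Λ
  have hfactorial (k : ℕ) : (k.factorial : ℚ) ≠ 0 := by positivity
  simp [rhoTo, ← Nat.Partition.ext_iff, hfactorial]

theorem rhoTo_apply_of_le {n m : ℕ} (h : n ≤ m) (x : n.Partition → ℚ) (Λ : m.Partition) :
    rhoTo m x Λ = ∑ Δ : n.Partition,
      (if Λ.parts = Δ.parts + Multiset.replicate (m - n) 1 then
        (Δ.parts.count 1 + (m - n)).choose (Δ.parts.count 1) else 0 : ℕ) * x Δ := by
  rw [rhoTo, if_pos h]
  refine Finset.sum_congr rfl fun Δ _ => ?_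
  split_ifs
  · rw [Nat.cast_add_choose]
  · rw [Nat.cast_zero, zero_mul]

/-- The sum of the images in `A_m` of the components of `f` of degree at most `m` under the
padding maps `ρ`. -/
noncomputable def padSum (m : ℕ) (f : Diagram → ℚ) : m.Partition → ℚ :=
  ∑ k ∈ Finset.range (m + 1), rhoTo m fun Δ : k.Partition => f ⟨k, Δ⟩

theorem padSum_single {n : ℕ} (m : ℕ) (Δ : n.Partition) :
    padSum m (Pi.single ⟨n, Δ⟩ 1) = rhoTo m (diagC Δ) := by
  rw [padSum, Finset.sum_eq_single n]
  · congr 1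
    funext Λ
    simp [Pi.single_apply, diagC]
  · exact fun k _ hk => rhoTo_eq_zero m fun Λ =>
      Pi.single_eq_of_ne (fun h => hk (congrArg Sigma.fst h)) _
  · intro hn
    funext Λ
    rw [rhoTo, if_neg (by simpa using hn), Pi.zero_apply]

theorem embedCenter_padSum (m : ℕ) (f : Diagram → ℚ) :
    embedCenter (padSum m f) = MonoidAlgebra.mapDomain toPermHom (shapeSum (Fin m) f) := by
  ext g
  have hdegree (p : PartialPerm (Fin m)) (_ : p ∈ Finset.univ.filter (toPermHom · = g)) :
      p.shape ∈ (Finset.range (m + 1)).sigma fun k => (Finset.univ : Finset k.Partition) := by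
    refine Finset.mem_sigma.2 ⟨Finset.mem_range_succ_iff.2 ?_, Finset.mem_univ _⟩
    exact p.domain.card_le_univ.trans_eq (Fintype.card_fin m)
  simp only [coeff_embedCenter, coeff_mapDomain_eq_sum, coeff_shapeSum]
  rw [← Finset.sum_fiberwise_of_maps_to hdegree, Finset.sum_sigma,
    padSum, Finset.sum_apply]
  refine Finset.sum_congr rfl fun k hk => ?_
  have hkm : k ≤ m := Finset.mem_range_succ_iff.1 hk
  rw [rhoTo_apply_of_le hkm]
  refine Finset.sum_congr rfl fun Δ _ => ?_
  rw [Finset.filter_filter, Finset.sum_congr rfl (g := fun _ => f ⟨k, Δ⟩)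
    (fun p hp => congrArg f (Finset.mem_filter.1 hp).2.2), Finset.sum_const, nsmul_eq_mul]
  exact congrArg (fun c : ℕ => c * f ⟨k, Δ⟩)
    (card_toPerm_eq_and_shape_eq g (Δ := ⟨k, Δ⟩) hkm).symm

theorem circ_padSum (m : ℕ) (f h : Diagram → ℚ) :
    circ (padSum m f) (padSum m h) = padSum m (convolution f h) := by
  rw [← classCoeff_embedCenter (padSum m (convolution f h)), embedCenter_padSum,
    shapeSum_convolution, MonoidAlgebra.mapDomain_mul, ← embedCenter_padSum, ← embedCenter_padSum]
  rfl

end Padding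

section Product

variable {n₁ n₂ : ℕ}

theorem bracket_eq_convolution (Δ₁ : n₁.Partition) (Δ₂ : n₂.Partition) (n : ℕ) :
    bracket Δ₁ Δ₂ n =
      fun Λ => convolution (Pi.single ⟨n₁, Δ₁⟩ 1) (Pi.single ⟨n₂, Δ₂⟩ 1) ⟨n, Λ⟩ := by
  induction n using Nat.strong_induction_on with
  | _ n ih =>
  rw [bracket]
  split_ifs with hn
  · set f : Diagram → ℚ := convolution (Pi.single ⟨n₁, Δ₁⟩ 1) (Pi.single ⟨n₂, Δ₂⟩ 1) with hf
    have hbracket : ∑ k ∈ Finset.Ico (max n₁ n₂) n, rhoTo n (bracket Δ₁ Δ₂ k) =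
        ∑ k ∈ Finset.Ico (max n₁ n₂) n, rhoTo n fun Λ : k.Partition => f ⟨k, Λ⟩ :=
      Finset.sum_congr rfl fun k hk => by rw [ih k (Finset.mem_Ico.1 hk).2]
    have hbelow (k : ℕ) (hkn : k ∈ Finset.range n) (hk : k ∉ Finset.Ico (max n₁ n₂) n) :
        rhoTo n (fun Λ : k.Partition => f ⟨k, Λ⟩) = 0 :=
      rhoTo_eq_zero n fun Λ => convolution_single_eq_zero 1 1 fun h =>
        hk (Finset.mem_Ico.2 ⟨h.1, Finset.mem_range.1 hkn⟩)
    have hsubset : Finset.Ico (max n₁ n₂) n ⊆ Finset.range n := fun k hk =>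
      Finset.mem_range.2 (Finset.mem_Ico.1 hk).2
    rw [Finset.sum_attach (f := fun k => rhoTo n (bracket Δ₁ Δ₂ k)), hbracket,
      Finset.sum_subset hsubset hbelow, ← padSum_single, ← padSum_single, circ_padSum, ← hf,
      padSum, Finset.sum_range_succ, rhoTo_self, add_sub_cancel_left]
  · funext Λ
    exact (convolution_single_eq_zero 1 1 hn).symm

/-- The coordinates of an element of `A_∞°` in the basis of Young diagrams. -/
def coordinates : Ainf →ₗ[ℚ] (Diagram → ℚ) where
  toFun x Λ := x Λ.1 Λ.2
  map_add' _ _ := rfl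
  map_smul' _ _ := rfl

@[simp] theorem coordinates_apply (x : Ainf) (Λ : Diagram) : coordinates x Λ = x Λ.1 Λ.2 := rfl

theorem coordinates_ofDiag {n : ℕ} (Δ : n.Partition) :
    coordinates (ofDiag Δ) = Pi.single ⟨n, Δ⟩ 1 := by
  funext ⟨m, Λ⟩
  by_cases hm : m = n
  · subst hm
    simp [ofDiag, diagC, Pi.single_apply]
  · rw [Pi.single_eq_of_ne fun h => hm (congrArg Sigma.fst h)]
    simp [ofDiag, DFinsupp.single_eq_of_ne hm]

theorem coordinates_diagMul (Δ₁ : n₁.Partition) (Δ₂ : n₂.Partition) :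
    coordinates (diagMul Δ₁ Δ₂) =
      convolution (coordinates (ofDiag Δ₁)) (coordinates (ofDiag Δ₂)) := by
  funext ⟨n, Λ⟩
  have hdegree : diagMul Δ₁ Δ₂ n = bracket Δ₁ Δ₂ n := by
    by_cases hn : n ∈ Finset.Icc (max n₁ n₂) (n₁ + n₂)
    · rw [diagMul, DFinsupp.finsetSum_apply, Finset.sum_eq_single_of_mem n hn,
        DFinsupp.single_eq_same]
      exact fun k _ hk => DFinsupp.single_eq_of_ne hk.symm
    · rw [diagMul, DFinsupp.finsetSum_apply, bracket, if_neg (by simpa using hn)]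
      exact Finset.sum_eq_zero fun k hk => DFinsupp.single_eq_of_ne fun h => hn (h ▸ hk)
  rw [coordinates_ofDiag, coordinates_ofDiag]
  exact congrFun (hdegree.trans (bracket_eq_convolution Δ₁ Δ₂ n)) Λ

theorem sum_smul_ofDiag (x : Ainf) :
    ∑ n ∈ x.support, ∑ Δ : n.Partition, x n Δ • ofDiag Δ = x := by
  have hdegree (n : ℕ) : ∑ Δ : n.Partition, x n Δ • ofDiag Δ = DFinsupp.single n (x n) := by
    have hx : ∑ Δ : n.Partition, x n Δ • diagC Δ = x n := by
      funext Λ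
      simp [diagC]
    calc ∑ Δ : n.Partition, x n Δ • ofDiag Δ
        = DFinsupp.lsingle (R := ℚ) n (∑ Δ : n.Partition, x n Δ • diagC Δ) := by
          simp only [map_sum, map_smul, DFinsupp.lsingle_apply, ofDiag]
      _ = DFinsupp.single n (x n) := by rw [hx, DFinsupp.lsingle_apply]
  simp only [hdegree]
  exact DFinsupp.sum_single

theorem shapeSum_coordinates_mulAinf (α : Type*) [DecidableEq α] [Fintype α] (x y : Ainf) :
    shapeSum α (coordinates (mulAinf x y)) =
      shapeSum α (coordinates x) * shapeSum α (coordinates y) := by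
  conv_rhs => rw [← sum_smul_ofDiag x, ← sum_smul_ofDiag y]
  simp only [mulAinf, map_sum, map_smul, coordinates_diagMul, shapeSum_convolution,
    Finset.sum_mul_sum, smul_mul_smul_comm]

theorem eq_of_shapeSum_coordinates_eq {x y : Ainf}
    (h : ∀ n, shapeSum (Fin n) (coordinates x) = shapeSum (Fin n) (coordinates y)) : x = y := by
  ext n Λ
  obtain ⟨g, rfl⟩ := cyclePartition_surjective n Λ
  simpa [shape_ofPerm] using congrArg (fun z => z.coeff (ofPerm g)) (h n)

end Product

theorem commutative_associative_algebra_of_Young_diagrams_general (x y z : Ainf) :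
    mulAinf x y = mulAinf y x ∧ mulAinf (mulAinf x y) z = mulAinf x (mulAinf y z) := by
  constructor <;> refine eq_of_shapeSum_coordinates_eq fun n => ?_
  · rw [shapeSum_coordinates_mulAinf, shapeSum_coordinates_mulAinf, commute_shapeSum]
  · simp only [shapeSum_coordinates_mulAinf, mul_assoc]

theorem commutative_associative_algebra_of_Young_diagrams
    {n₁ n₂ n₃ : ℕ} (Δ₁ : Nat.Partition n₁) (Δ₂ : Nat.Partition n₂) (Δ₃ : Nat.Partition n₃) :
    mulAinf (ofDiag Δ₁) (ofDiag Δ₂) = mulAinf (ofDiag Δ₂) (ofDiag Δ₁) ∧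
    mulAinf (mulAinf (ofDiag Δ₁) (ofDiag Δ₂)) (ofDiag Δ₃) =
      mulAinf (ofDiag Δ₁) (mulAinf (ofDiag Δ₂) (ofDiag Δ₃)) :=
  commutative_associative_algebra_of_Young_diagrams_general _ _ _
end

section
/- For every Young diagram Δ and every N ≥ 1, the operator 𝒲_N(Δ) maps the subring ℚ[p₁, p₂, …] ⊆ ℚ[X_{ij} : 1 ≤ i,j ≤ N] of polynomials in the power sums p_k = tr X^k (equivalently, the ring of conjugation-invariant, i.e. symmetric in the eigenvalues, polynomial functions of the matrix X) to itself. -/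
open scoped Classical
open MvPolynomial

/-- The polynomial ring `ℚ[X_{ij} : 1 ≤ i,j ≤ N]` in the entries of an `N×N` matrix of
independent variables. -/
abbrev RN (N : ℕ) : Type := MvPolynomial (Fin N × Fin N) ℚ

/-- The `N×N` matrix `X` of independent variables. -/
noncomputable def XM (N : ℕ) : Matrix (Fin N) (Fin N) (RN N) :=
  Matrix.of fun i j => MvPolynomial.X (i, j)

/-- The power sums `p_k = tr X^k`. -/
noncomputable def pSub (N : ℕ) (k : ℕ+) : RN N := Matrix.trace ((XM N) ^ (k : ℕ))

/-- Substitution `F ↦ F(p(X))` of `p_k = tr X^k` into a polynomial in `p₁, p₂, …`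
(the variable of index `k : ℕ+` is `p_k`). -/
noncomputable def psubst (N : ℕ) : MvPolynomial ℕ+ ℚ →ₐ[ℚ] RN N :=
  MvPolynomial.aeval (pSub N)

/-- The operator `D_{ab} = Σ_{e=1}^N X_{ae} ∂/∂X_{be}`. -/
noncomputable def DN (N : ℕ) (a b : Fin N) (P : RN N) : RN N :=
  ∑ e : Fin N, MvPolynomial.X (a, e) * MvPolynomial.pderiv (b, e) P

/-- The normally ordered operator
`:D_{a₁b₁}⋯D_{a_nb_n}: = Σ_{e₁,…,e_n=1}^N X_{a₁e₁}⋯X_{a_ne_n} ∂ⁿ/(∂X_{b₁e₁}⋯∂X_{b_ne_n})`. -/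
noncomputable def NOpN (N : ℕ) {n : ℕ} (a b : Fin n → Fin N) (P : RN N) : RN N :=
  ∑ e : Fin n → Fin N,
    (∏ i, MvPolynomial.X (a i, e i)) *
      (List.ofFn (fun i => ((b i, e i) : Fin N × Fin N))).foldr
        (fun v G => MvPolynomial.pderiv v G) P

/-- `κ(Δ) = (∏_k m_k! k^{m_k})⁻¹` where `m_k` is the number of rows of length `k`. -/
noncomputable def kappa (parts : Multiset ℕ) : ℚ :=
  (∏ k ∈ parts.toFinset, (((parts.count k).factorial : ℚ) * (k : ℚ) ^ (parts.count k)))⁻¹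

/-- The operator `𝒲_N(Δ) = κ(Δ) Σ_{a₁,…,a_n=1}^N :D_{a₁a_{g(1)}}⋯D_{a_na_{g(n)}}:`
computed from a permutation `g` of cycle type `Δ`. -/
noncomputable def WN (N : ℕ) {n : ℕ} (Δ : Nat.Partition n) (g : Equiv.Perm (Fin n))
    (P : RN N) : RN N :=
  kappa Δ.parts • ∑ a : Fin n → Fin N, NOpN N a (fun i => a (g i)) P

/-!
Write `A` for the algebra generated by the power sums. The `n`-th derivatives
`∂ⁿP/∂X_{b₁e₁}⋯∂X_{bₙeₙ}` of `P ∈ A` are `A`-linear combinations of the products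
`∏ᵢ (X^{kᵢ})_{eᵢ, b_{σ(i)}}` with `σ ∈ Sₙ`. Indeed, a further derivative `∂/∂X_{be}` either hits
a coefficient in `A`, where `∂ tr X^k = k (X^{k-1})_{eb}` adds a fixed point to `σ`, or splits a
factor, `∂ (X^k)_{ij} = ∑ₗ (X^l)_{ib} (X^{k-1-l})_{ej}`, which inserts the new index into a cycle
of `σ`. The operator `𝒲_N` contracts such a product against `∏ᵢ X_{aᵢeᵢ}` with
`bᵢ = a_{g(i)}`, which closes it up into a product of traces of powers of `X`, one for each cycle of
`g ∘ σ`.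
-/

section Permutations

open Equiv.Perm

theorem prod_apply_decomposeFin_symm_zero {A : Type*} [CommMonoid A] {n : ℕ}
    (σ : Equiv.Perm (Fin n)) (f : Fin (n + 1) → Fin (n + 1) → A) :
    ∏ i, f i (decomposeFin.symm (0, σ) i) = f 0 0 * ∏ i, f i.succ (σ i).succ := by
  simp [Fin.prod_univ_succ]

theorem prod_apply_decomposeFin_symm_succ {A : Type*} [CommMonoid A] {n : ℕ}
    (σ : Equiv.Perm (Fin n)) (j : Fin n) (f : Fin (n + 1) → Fin (n + 1) → A) :
    ∏ i, f i (decomposeFin.symm ((σ j).succ, σ) i) =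
      f j.succ 0 * f 0 (σ j).succ * ∏ i ∈ Finset.univ.erase j, f i.succ (σ i).succ := by
  have image_of_ne : ∀ i ∈ Finset.univ.erase j,
      decomposeFin.symm ((σ j).succ, σ) i.succ = (σ i).succ := fun i hi ↦ by
    rw [decomposeFin_symm_apply_succ]
    exact Equiv.swap_apply_of_ne_of_ne (Fin.succ_ne_zero _)
      fun h ↦ Finset.ne_of_mem_erase hi (σ.injective (Fin.succ_injective _ h))
  rw [Fin.prod_univ_succ, decomposeFin_symm_apply_zero,
    ← Finset.mul_prod_erase _ _ (Finset.mem_univ j), decomposeFin_symm_apply_succ,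
    Equiv.swap_apply_right, Finset.prod_congr rfl fun i hi ↦ by rw [image_of_ne i hi],
    mul_left_comm, mul_assoc]

end Permutations

section PermTensor

variable {A ι : Type*} {n : ℕ}

/-- The tensor `∏ᵢ (Mᵢ)_{eᵢ, b_{σ(i)}}` attached to a permutation `σ` and matrices `M₁, …, Mₙ`.
A tensor is a function of the pairs `vᵢ = (bᵢ, eᵢ)`, the position of the `i`-th derivative
`∂/∂X_{bᵢeᵢ}`. -/
def permTensor [CommMonoid A] (σ : Equiv.Perm (Fin n)) (M : Fin n → Matrix ι ι A)
    (v : Fin n → ι × ι) : A :=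
  ∏ i, M i (v i).2 (v (σ i)).1

open Equiv.Perm in
theorem permTensor_decomposeFin_symm_zero [CommMonoid A] (σ : Equiv.Perm (Fin n))
    (M : Fin (n + 1) → Matrix ι ι A) (v : Fin (n + 1) → ι × ι) :
    permTensor (decomposeFin.symm (0, σ)) M v =
      M 0 (v 0).2 (v 0).1 * permTensor σ (Fin.tail M) (Fin.tail v) :=
  prod_apply_decomposeFin_symm_zero σ fun i i' ↦ M i (v i).2 (v i').1

open Equiv.Perm in
theorem permTensor_decomposeFin_symm_succ [CommMonoid A] (σ : Equiv.Perm (Fin n)) (j : Fin n)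
    (M : Fin (n + 1) → Matrix ι ι A) (v : Fin (n + 1) → ι × ι) :
    permTensor (decomposeFin.symm ((σ j).succ, σ)) M v =
      M j.succ (v j.succ).2 (v 0).1 * M 0 (v 0).2 (v (σ j).succ).1 *
        ∏ i ∈ Finset.univ.erase j, M i.succ (v i.succ).2 (v (σ i).succ).1 :=
  prod_apply_decomposeFin_symm_succ σ j fun i i' ↦ M i (v i).2 (v i').1

theorem permTensor_update [CommMonoid A] (σ : Equiv.Perm (Fin n)) (M : Fin n → Matrix ι ι A)
    (j : Fin n) (L : Matrix ι ι A) (v : Fin n → ι × ι) :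
    permTensor σ (Function.update M j L) v =
      L (v j).2 (v (σ j)).1 * ∏ i ∈ Finset.univ.erase j, M i (v i).2 (v (σ i)).1 := by
  rw [permTensor, ← Finset.mul_prod_erase _ _ (Finset.mem_univ j), Function.update_self]
  congr 1
  exact Finset.prod_congr rfl fun i hi ↦ by
    rw [Function.update_of_ne (Finset.ne_of_mem_erase hi)]

end PermTensor

section CyclicTraces

variable {A ι : Type*} [CommSemiring A] [Fintype ι] {n : ℕ}

theorem sum_fin_succ_pi_eq_sum_cons {B : Type*} [AddCommMonoid B]
    (F : (Fin (n + 1) → ι) → B) :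
    ∑ c, F c = ∑ c : Fin n → ι, ∑ x, F (Fin.cons x c) := by
  rw [← (Fin.consEquiv fun _ : Fin (n + 1) ↦ ι).sum_comp, Fintype.sum_prod_type_right]
  rfl

/-- The full trace of `permTensor σ M`: summing over all index tuples with `eᵢ = bᵢ` gives the
product, over the cycles of `σ`, of the traces of the products of the `Mᵢ` along the cycle. -/
def permTrace (σ : Equiv.Perm (Fin n)) (M : Fin n → Matrix ι ι A) : A :=
  ∑ c : Fin n → ι, permTensor σ M fun i ↦ (c i, c i)

open Equiv.Perm in
theorem permTrace_decomposeFin_symm_zero (σ : Equiv.Perm (Fin n))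
    (M : Fin (n + 1) → Matrix ι ι A) :
    permTrace (decomposeFin.symm (0, σ)) M = (M 0).trace * permTrace σ (Fin.tail M) := by
  simp only [permTrace, sum_fin_succ_pi_eq_sum_cons, permTensor_decomposeFin_symm_zero,
    Finset.mul_sum, Matrix.trace, Finset.sum_mul]
  rfl

open Equiv.Perm in
theorem permTrace_decomposeFin_symm_succ (σ : Equiv.Perm (Fin n)) (j : Fin n)
    (M : Fin (n + 1) → Matrix ι ι A) :
    permTrace (decomposeFin.symm ((σ j).succ, σ)) M =
      permTrace σ (Function.update (Fin.tail M) j (M j.succ * M 0)) := by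
  simp only [permTrace, sum_fin_succ_pi_eq_sum_cons, permTensor_decomposeFin_symm_succ,
    permTensor_update, Matrix.mul_apply, Finset.sum_mul]
  rfl

theorem permTrace_mem {S : Type*} [SetLike S A] [SubsemiringClass S A] {s : S}
    {𝓜 : Subsemigroup (Matrix ι ι A)} (trace_mem : ∀ L ∈ 𝓜, L.trace ∈ s)
    (σ : Equiv.Perm (Fin n)) {M : Fin n → Matrix ι ι A} (hM : ∀ i, M i ∈ 𝓜) :
    permTrace σ M ∈ s := by
  induction n with
  | zero =>
    have permTrace_eq_one : permTrace σ M = 1 := by simp [permTrace, permTensor]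
    exact permTrace_eq_one ▸ one_mem s
  | succ n ih =>
    obtain ⟨⟨p, σ⟩, rfl⟩ := Equiv.Perm.decomposeFin.symm.surjective σ
    cases p using Fin.cases with
    | zero =>
      rw [permTrace_decomposeFin_symm_zero]
      exact mul_mem (trace_mem _ (hM 0)) (ih σ fun i ↦ hM i.succ)
    | succ p =>
      obtain ⟨j, rfl⟩ := σ.surjective p
      rw [permTrace_decomposeFin_symm_succ]
      refine ih σ fun i ↦ ?_
      obtain rfl | hij := eq_or_ne i j
      · simpa using mul_mem (hM i.succ) (hM 0)
      · simpa [hij, Fin.tail] using hM i.succ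

/-- The contraction `∑_{a,e} ∏ᵢ Y_{aᵢeᵢ} · t((a_{g(1)}, e₁), …, (a_{g(n)}, eₙ))` of a tensor `t`
against a matrix `Y` along a permutation `g`. With `Y` the generic matrix and `t` the tensor of
`n`-th derivatives of `P` it is `∑_a :D_{a₁a_{g(1)}}⋯D_{aₙa_{g(n)}}: P`. -/
def permContraction (Y : Matrix ι ι A) (g : Equiv.Perm (Fin n)) :
    ((Fin n → ι × ι) → A) →ₗ[A] A where
  toFun t := ∑ a : Fin n → ι, ∑ e : Fin n → ι, (∏ i, Y (a i) (e i)) * t fun i ↦ (a (g i), e i)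
  map_add' s t := by simp only [Pi.add_apply, mul_add, Finset.sum_add_distrib]
  map_smul' c t := by
    simp only [Pi.smul_apply, smul_eq_mul, mul_left_comm, Finset.mul_sum, RingHom.id_apply]

theorem permContraction_permTensor (Y : Matrix ι ι A) (g σ : Equiv.Perm (Fin n))
    (M : Fin n → Matrix ι ι A) :
    permContraction Y g (permTensor σ M) = permTrace (g * σ) fun i ↦ Y * M i := by
  simp only [permContraction, LinearMap.coe_mk, AddHom.coe_mk, permTrace, permTensor,
    Matrix.mul_apply, ← Finset.prod_mul_distrib, Finset.prod_univ_sum, Fintype.piFinset_univ]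
  rfl

end CyclicTraces

section Derivations

variable {R A : Type*} [CommSemiring R] [CommSemiring A] [Algebra R A]

theorem derivation_prod {α M : Type*} [DecidableEq α] [AddCommMonoid M] [Module A M] [Module R M]
    (D : Derivation R A M) (s : Finset α) (f : α → A) :
    D (∏ i ∈ s, f i) = ∑ j ∈ s, (∏ i ∈ s.erase j, f i) • D (f j) := by
  induction s using Finset.induction_on with
  | empty => simp
  | insert a s ha ih =>
    rw [Finset.prod_insert ha, D.leibniz, ih, Finset.sum_insert ha, Finset.erase_insert ha,
      add_comm, Finset.smul_sum]
    congr 1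
    refine Finset.sum_congr rfl fun j hj ↦ ?_
    have ha' : a ∉ s.erase j := fun h ↦ ha (Finset.mem_of_mem_erase h)
    rw [Finset.erase_insert_of_ne (ne_of_mem_of_not_mem hj ha).symm, Finset.prod_insert ha',
      smul_smul]

variable {ι : Type*} [Fintype ι] (D : Derivation R A A)

theorem map_derivation_mul {κ μ : Type*} (M : Matrix κ ι A) (L : Matrix ι μ A) :
    (M * L).map D = M.map D * L + M * L.map D := by
  ext i j
  simp [Matrix.mul_apply, Finset.sum_add_distrib, add_comm, mul_comm]

variable [DecidableEq ι]

theorem map_derivation_pow (M : Matrix ι ι A) (k : ℕ) :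
    (M ^ k).map D = ∑ l ∈ Finset.range k, M ^ l * M.map D * M ^ (k - 1 - l) := by
  induction k with
  | zero =>
    ext i j
    by_cases hij : i = j <;> simp [hij]
  | succ k ih =>
    rw [pow_succ', map_derivation_mul, ih, Finset.sum_range_succ', Finset.mul_sum, add_comm]
    simp [pow_succ', mul_assoc, add_comm, Nat.sub_sub]

theorem derivation_trace_pow (M : Matrix ι ι A) (k : ℕ) :
    D (M ^ k).trace = k * (M ^ (k - 1) * M.map D).trace := by
  have cyclic : ∀ l ∈ Finset.range k,
      (M ^ l * M.map D * M ^ (k - 1 - l)).trace = (M ^ (k - 1) * M.map D).trace := fun l hl ↦ by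
    rw [Matrix.trace_mul_comm, ← mul_assoc, ← pow_add,
      Nat.sub_add_cancel (Nat.le_sub_one_of_lt (Finset.mem_range.1 hl))]
  rw [AddMonoidHom.map_trace D, map_derivation_pow, Matrix.trace_sum, Finset.sum_congr rfl cyclic]
  simp

end Derivations

section GenericMatrix

open Matrix

variable {R ι : Type*} [CommSemiring R] [DecidableEq ι]

theorem map_pderiv_mvPolynomialX (s : ι × ι) :
    (mvPolynomialX ι ι R).map (pderiv s) = single s.1 s.2 1 := by
  ext i j : 1
  simp [pderiv_X, Pi.single_apply, single_apply, Prod.ext_iff, eq_comm]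

variable [Fintype ι]

theorem pderiv_mvPolynomialX_pow_apply (s : ι × ι) (k : ℕ) (i j : ι) :
    pderiv s ((mvPolynomialX ι ι R ^ k) i j) =
      ∑ l ∈ Finset.range k,
        (mvPolynomialX ι ι R ^ l) i s.1 * (mvPolynomialX ι ι R ^ (k - 1 - l)) s.2 j := by
  rw [← Matrix.map_apply (f := pderiv s), map_derivation_pow, map_pderiv_mvPolynomialX,
    Matrix.sum_apply]
  simp [mul_apply, single_apply, ite_and]

theorem pderiv_trace_mvPolynomialX_pow (s : ι × ι) (k : ℕ) :
    pderiv s (mvPolynomialX ι ι R ^ k).trace =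
      k * (mvPolynomialX ι ι R ^ (k - 1)) s.2 s.1 := by
  rw [derivation_trace_pow, map_pderiv_mvPolynomialX, trace_mul_single]
  simp

end GenericMatrix

section IteratedDerivatives

variable {R τ : Type*} [CommSemiring R] {n : ℕ}

/-- The tensor product `s ⊗ t` of a tensor `s` of rank one with a tensor `t` of rank `n`. -/
def tensorCons {A : Type*} [CommSemiring A] :
    (τ → A) →ₗ[A] ((Fin n → τ) → A) →ₗ[A] (Fin (n + 1) → τ) → A :=
  LinearMap.mk₂ A (fun s t v ↦ s (v 0) * t (Fin.tail v))
    (fun _ _ _ ↦ funext fun _ ↦ add_mul _ _ _) (fun _ _ _ ↦ funext fun _ ↦ mul_assoc _ _ _)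
    (fun _ _ _ ↦ funext fun _ ↦ mul_add _ _ _) (fun _ _ _ ↦ funext fun _ ↦ mul_left_comm _ _ _)

theorem tensorCons_apply {A : Type*} [CommSemiring A] (s : τ → A) (t : (Fin n → τ) → A)
    (v : Fin (n + 1) → τ) : tensorCons s t v = s (v 0) * t (Fin.tail v) :=
  rfl

/-- The gradient of a polynomial, as a rank-one tensor. -/
noncomputable def polynomialGradient : MvPolynomial τ R →ₗ[R] τ → MvPolynomial τ R :=
  LinearMap.pi fun s ↦ (pderiv s).toLinearMap

/-- The gradient of a tensor of rank `n`: a tensor of rank `n + 1` whose new slot comes first. -/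
noncomputable def tensorGradient :
    ((Fin n → τ) → MvPolynomial τ R) →ₗ[R] (Fin (n + 1) → τ) → MvPolynomial τ R :=
  LinearMap.pi fun v ↦ (pderiv (v 0)).toLinearMap ∘ₗ LinearMap.proj (Fin.tail v)

theorem tensorGradient_apply (t : (Fin n → τ) → MvPolynomial τ R) (v : Fin (n + 1) → τ) :
    tensorGradient t v = pderiv (v 0) (t (Fin.tail v)) :=
  rfl

theorem polynomialGradient_mul (p q : MvPolynomial τ R) :
    polynomialGradient (p * q) = p • polynomialGradient q + q • polynomialGradient p :=
  funext fun s ↦ (pderiv s).leibniz p q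

theorem tensorGradient_smul (p : MvPolynomial τ R) (t : (Fin n → τ) → MvPolynomial τ R) :
    tensorGradient (p • t) = p • tensorGradient t + tensorCons (polynomialGradient p) t := by
  funext v
  rw [tensorGradient_apply, Pi.smul_apply, smul_eq_mul, Derivation.leibniz, smul_eq_mul,
    smul_eq_mul, mul_comm (t _)]
  rfl

/-- The tensor `(s₁, …, sₙ) ↦ ∂ⁿP/∂s₁⋯∂sₙ` of all `n`-th derivatives of `P`. -/
noncomputable def iteratedGradient (P : MvPolynomial τ R) :
    (n : ℕ) → (Fin n → τ) → MvPolynomial τ R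
  | 0 => fun _ ↦ P
  | n + 1 => tensorGradient (iteratedGradient P n)

theorem foldr_pderiv_ofFn (P : MvPolynomial τ R) (v : Fin n → τ) :
    (List.ofFn v).foldr (fun s Q ↦ pderiv s Q) P = iteratedGradient P n v := by
  induction n with
  | zero => rfl
  | succ n ih =>
    rw [List.ofFn_succ, List.foldr_cons, ih]
    rfl

end IteratedDerivatives

section PowerSums

open Matrix

variable (R ι : Type*) [CommSemiring R] [Fintype ι] [DecidableEq ι]

/-- The algebra `R[p₁, p₂, …]` generated by the power sums `p_k = tr X^k` of the generic matrix. -/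
noncomputable def powerSumAlgebra : Subalgebra R (MvPolynomial (ι × ι) R) :=
  Algebra.adjoin R (Set.range fun k : ℕ+ ↦ (mvPolynomialX ι ι R ^ (k : ℕ)).trace)

/-- The rank-`n` tensors spanned over `R[p₁, p₂, …]` by the products
`∏ᵢ (X^{kᵢ})_{eᵢ, b_{σ(i)}}`. -/
noncomputable def powerTensors (n : ℕ) :
    Submodule (powerSumAlgebra R ι) ((Fin n → ι × ι) → MvPolynomial (ι × ι) R) :=
  Submodule.span _ (Set.range fun σk : Equiv.Perm (Fin n) × (Fin n → ℕ) ↦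
    permTensor σk.1 fun i ↦ mvPolynomialX ι ι R ^ σk.2 i)

variable {R ι} {n : ℕ}

theorem trace_mvPolynomialX_pow_mem_powerSumAlgebra (k : ℕ) :
    (mvPolynomialX ι ι R ^ k).trace ∈ powerSumAlgebra R ι := by
  obtain rfl | hk := k.eq_zero_or_pos
  · rw [pow_zero, trace_one]
    exact natCast_mem _ _
  · exact Algebra.subset_adjoin ⟨⟨k, hk⟩, rfl⟩

open Equiv.Perm in
theorem tensorGradient_permTensor_pow (σ : Equiv.Perm (Fin n)) (k : Fin n → ℕ) :
    tensorGradient (permTensor σ fun i ↦ mvPolynomialX ι ι R ^ k i) =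
      ∑ j, ∑ l ∈ Finset.range (k j), permTensor (decomposeFin.symm ((σ j).succ, σ))
        fun i ↦ mvPolynomialX ι ι R ^
          (Fin.cons (k j - 1 - l) (Function.update k j l) : Fin (n + 1) → ℕ) i := by
  funext v
  rw [tensorGradient_apply, permTensor, derivation_prod]
  simp only [Finset.sum_apply]
  refine Finset.sum_congr rfl fun j _ ↦ ?_
  rw [pderiv_mvPolynomialX_pow_apply, Finset.smul_sum]
  refine Finset.sum_congr rfl fun l _ ↦ ?_
  rw [permTensor_decomposeFin_symm_succ, smul_eq_mul, mul_comm]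
  simp only [Fin.cons_succ, Fin.cons_zero, Function.update_self]
  congr 1
  exact Finset.prod_congr rfl fun i hi ↦ by
    rw [Function.update_of_ne (Finset.ne_of_mem_erase hi), Fin.tail, Fin.tail]

open Equiv.Perm in
theorem tensorCons_permTensor_pow (m : ℕ) (σ : Equiv.Perm (Fin n)) (k : Fin n → ℕ) :
    tensorCons (fun s ↦ (mvPolynomialX ι ι R ^ m) s.2 s.1)
        (permTensor σ fun i ↦ mvPolynomialX ι ι R ^ k i) =
      permTensor (decomposeFin.symm (0, σ))
        fun i ↦ mvPolynomialX ι ι R ^ (Fin.cons m k : Fin (n + 1) → ℕ) i := by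
  funext v
  rw [tensorCons_apply, permTensor_decomposeFin_symm_zero]
  rfl

theorem permTensor_mem_powerTensors (σ : Equiv.Perm (Fin n)) (k : Fin n → ℕ) :
    permTensor σ (fun i ↦ mvPolynomialX ι ι R ^ k i) ∈ powerTensors R ι n :=
  Submodule.subset_span ⟨(σ, k), rfl⟩

theorem smul_mem_powerTensors {p : MvPolynomial (ι × ι) R} (hp : p ∈ powerSumAlgebra R ι)
    {t : (Fin n → ι × ι) → MvPolynomial (ι × ι) R} (ht : t ∈ powerTensors R ι n) :
    p • t ∈ powerTensors R ι n :=
  (powerTensors R ι n).smul_mem ⟨p, hp⟩ ht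

theorem tensorCons_pow_mem_powerTensors (k : ℕ) {t : (Fin n → ι × ι) → MvPolynomial (ι × ι) R}
    (ht : t ∈ powerTensors R ι n) :
    tensorCons (fun s ↦ (mvPolynomialX ι ι R ^ k) s.2 s.1) t ∈ powerTensors R ι (n + 1) := by
  induction ht using Submodule.span_induction with
  | mem t ht =>
    obtain ⟨⟨σ, m⟩, rfl⟩ := ht
    rw [tensorCons_permTensor_pow]
    exact permTensor_mem_powerTensors _ _
  | zero => rw [map_zero]; exact zero_mem _
  | add s t _ _ hs ht => rw [map_add]; exact add_mem hs ht
  | smul p t _ ht =>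
    rw [Subalgebra.smul_def, map_smul]
    exact smul_mem_powerTensors p.2 ht

theorem tensorCons_gradient_mem_powerTensors {p : MvPolynomial (ι × ι) R}
    (hp : p ∈ powerSumAlgebra R ι) {t : (Fin n → ι × ι) → MvPolynomial (ι × ι) R}
    (ht : t ∈ powerTensors R ι n) :
    tensorCons (polynomialGradient p) t ∈ powerTensors R ι (n + 1) := by
  induction hp using Algebra.adjoin_induction with
  | mem p hp =>
    obtain ⟨k, rfl⟩ := hp
    have gradient_trace : polynomialGradient (mvPolynomialX ι ι R ^ (k : ℕ)).trace =
        ((k : ℕ) : MvPolynomial (ι × ι) R) •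
          fun s : ι × ι ↦ (mvPolynomialX ι ι R ^ ((k : ℕ) - 1)) s.2 s.1 :=
      funext fun s ↦ pderiv_trace_mvPolynomialX_pow s k
    rw [gradient_trace, map_smul, LinearMap.smul_apply]
    exact smul_mem_powerTensors (natCast_mem _ _) (tensorCons_pow_mem_powerTensors _ ht)
  | algebraMap r =>
    have gradient_const : polynomialGradient (algebraMap R (MvPolynomial (ι × ι) R) r) = 0 :=
      funext fun s ↦ (pderiv s).map_algebraMap r
    rw [gradient_const, map_zero]
    exact zero_mem _
  | add p q _ _ hp hq =>
    rw [map_add, map_add]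
    exact add_mem hp hq
  | mul p q hp hq hp' hq' =>
    rw [polynomialGradient_mul, map_add, map_smul, map_smul]
    exact add_mem (smul_mem_powerTensors hp hq') (smul_mem_powerTensors hq hp')

theorem tensorGradient_mem_powerTensors {t : (Fin n → ι × ι) → MvPolynomial (ι × ι) R}
    (ht : t ∈ powerTensors R ι n) : tensorGradient t ∈ powerTensors R ι (n + 1) := by
  induction ht using Submodule.span_induction with
  | mem t ht =>
    obtain ⟨⟨σ, k⟩, rfl⟩ := ht
    rw [tensorGradient_permTensor_pow]
    exact sum_mem fun j _ ↦ sum_mem fun l _ ↦ permTensor_mem_powerTensors _ _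
  | zero => rw [map_zero]; exact zero_mem _
  | add s t _ _ hs ht => rw [map_add]; exact add_mem hs ht
  | smul p t ht ht' =>
    rw [Subalgebra.smul_def, tensorGradient_smul]
    exact add_mem (smul_mem_powerTensors p.2 ht') (tensorCons_gradient_mem_powerTensors p.2 ht)

theorem iteratedGradient_mem_powerTensors {P : MvPolynomial (ι × ι) R}
    (hP : P ∈ powerSumAlgebra R ι) (n : ℕ) : iteratedGradient P n ∈ powerTensors R ι n := by
  induction n with
  | zero =>
    have eq_smul_one : iteratedGradient P 0 =
        P • permTensor 1 fun i ↦ mvPolynomialX ι ι R ^ (0 : Fin 0 → ℕ) i :=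
      funext fun _ ↦ (mul_one P).symm
    rw [eq_smul_one]
    exact smul_mem_powerTensors hP (permTensor_mem_powerTensors 1 0)
  | succ n ih => exact tensorGradient_mem_powerTensors ih

theorem permContraction_mem_powerSumAlgebra (g : Equiv.Perm (Fin n))
    {t : (Fin n → ι × ι) → MvPolynomial (ι × ι) R} (ht : t ∈ powerTensors R ι n) :
    permContraction (mvPolynomialX ι ι R) g t ∈ powerSumAlgebra R ι := by
  induction ht using Submodule.span_induction with
  | mem t ht =>
    obtain ⟨⟨σ, k⟩, rfl⟩ := ht
    rw [permContraction_permTensor]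
    refine permTrace_mem (𝓜 := (Submonoid.powers (mvPolynomialX ι ι R)).toSubsemigroup) ?_ _
      fun i ↦ ⟨k i + 1, pow_succ' _ _⟩
    rintro _ ⟨m, rfl⟩
    exact trace_mvPolynomialX_pow_mem_powerSumAlgebra m
  | zero => rw [map_zero]; exact zero_mem _
  | add s t _ _ hs ht => rw [map_add]; exact add_mem hs ht
  | smul p t _ ht =>
    rw [Subalgebra.smul_def, map_smul]
    exact mul_mem p.2 ht

theorem WN_preserves_symmetric_polynomials_general (g : Equiv.Perm (Fin n))
    {P : MvPolynomial (ι × ι) R} (hP : P ∈ powerSumAlgebra R ι) :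
    permContraction (mvPolynomialX ι ι R) g (iteratedGradient P n) ∈ powerSumAlgebra R ι :=
  permContraction_mem_powerSumAlgebra g (iteratedGradient_mem_powerTensors hP n)

end PowerSums

theorem mem_powerSumAlgebra_iff_exists_psubst {N : ℕ} {P : RN N} :
    P ∈ powerSumAlgebra ℚ (Fin N) ↔ ∃ G : MvPolynomial ℕ+ ℚ, P = psubst N G := by
  have range_psubst : (psubst N).range = powerSumAlgebra ℚ (Fin N) :=
    (Algebra.adjoin_range_eq_range_aeval ℚ (pSub N)).symm
  simp only [← range_psubst, AlgHom.mem_range, eq_comm]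

theorem WN_eq_smul_permContraction (N : ℕ) {n : ℕ} (Δ : Nat.Partition n)
    (g : Equiv.Perm (Fin n)) (P : RN N) :
    WN N Δ g P = kappa Δ.parts •
      permContraction (Matrix.mvPolynomialX (Fin N) (Fin N) ℚ) g (iteratedGradient P n) := by
  simp only [WN, NOpN, foldr_pderiv_ofFn]
  rfl

theorem WN_preserves_symmetric_polynomials {n : ℕ} (Δ : Nat.Partition n)
    (g : Equiv.Perm (Fin n)) (hg : fullCycleType g = Δ.parts) (N : ℕ) (hN : 1 ≤ N)
    (F : MvPolynomial ℕ+ ℚ) :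
    ∃ G : MvPolynomial ℕ+ ℚ, WN N Δ g (psubst N F) = psubst N G := by
  rw [← mem_powerSumAlgebra_iff_exists_psubst, WN_eq_smul_permContraction]
  exact Subalgebra.smul_mem _ (WN_preserves_symmetric_polynomials_general g
    (mem_powerSumAlgebra_iff_exists_psubst.2 ⟨F, rfl⟩)) _
end
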